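/- (Matsumoto–Cadavid–Korkmaz relation in the braid group.) Let h ≥ 1 and let σ_1, …, σ_{4h−1} be elements of a group G satisfying the braid relations. Set Γ = σ_1σ_2⋯σ_{2h−1} · σ_{4h−1}σ_{4h−2}⋯σ_{2h+1}, D_1 = (σ_1σ_2⋯σ_{2h−1})^{2h}, D_2 = (σ_{4h−1}σ_{4h−2}⋯σ_{2h+1})^{2h}, and for i = 0, 1, …, 2h−1 set B_i = D_2^{−1}·Γ^{i+1}σ_{2h}Γ^{−(i+1)}·D_2. Then (σ_1σ_2⋯σ_{4h−1})^{4h} = (B_0B_1⋯B_{2h−1}·D_1·D_2)^2. -/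

import Mathlib

/-!
Write `m = 2h`, `A = σ_1 ⋯ σ_{m-1}`, `E = σ_{2m-1} ⋯ σ_{m+1}` and `δ = σ_1 ⋯ σ_{2m-1}`. As `A` and
`E` commute, `Γ = A E` and `Γ ^ m = D₁ D₂`. The product of the `B_i` telescopes to
`D₂⁻¹ (Γ σ_m) ^ m Γ ^ (-m) D₂`, hence `B_0 ⋯ B_{m-1} D₁ D₂ = D₂⁻¹ (Γ σ_m) ^ m D₂`, whose square is
`D₂⁻¹ (Γ σ_m) ^ (2 m) D₂`.

Here `Γ σ_m = (σ_1 ⋯ σ_{m-1}) (σ_{2m-1} ⋯ σ_m)` is a product of all the generators, each occurring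
once, so it is conjugate to `δ`. Since `δ ^ (2 m)` (the full twist) commutes with every generator,
the `2 m`-th powers of `Γ σ_m` and `δ` agree (`asc_mul_desc_pow`), and conjugating by `D₂` changes
nothing.

The full twist commutes with the generators because `δ σ_i = σ_{i+1} δ` for `i < N := 2 m - 1`
(`semiconj_asc`) and `δ ^ 2 σ_N = σ_1 δ ^ 2` (`semiconj_asc_sq`): passing `δ ^ (N + 1)` across `σ_i`
shifts it up to `σ_N`, wraps it round to `σ_1` and shifts it back to `σ_i`.
-/

/-- The ascending product `σ_a σ_{a+1} ⋯ σ_b` (written left to right). -/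
def ascProd {G : Type*} [Group G] (σ : ℕ → G) (a b : ℕ) : G :=
  ((List.range' a (b + 1 - a)).map σ).prod

/-- The descending product `σ_a σ_{a-1} ⋯ σ_b` (written left to right). -/
def descProd {G : Type*} [Group G] (σ : ℕ → G) (a b : ℕ) : G :=
  (((List.range' b (a + 1 - b)).map σ).reverse).prod


section BraidRelations

variable {G : Type*} [Group G] {σ : ℕ → G}

theorem ascProd_succ {a b : ℕ} (hab : a ≤ b + 1) :
    ascProd σ a (b + 1) = ascProd σ a b * σ (b + 1) := by
  unfold ascProd
  rw [show b + 1 + 1 - a = (b + 1 - a) + 1 by omega, List.range'_concat]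
  simp [show a + (b + 1 - a) = b + 1 by omega]

theorem ascProd_cons {a b : ℕ} (hab : a ≤ b) :
    ascProd σ a b = σ a * ascProd σ (a + 1) b := by
  unfold ascProd
  rw [show b + 1 - a = (b + 1 - (a + 1)) + 1 by omega, List.range'_succ]
  simp

theorem descProd_snoc {a b : ℕ} (hab : b ≤ a) :
    descProd σ a b = descProd σ a (b + 1) * σ b := by
  unfold descProd
  rw [show a + 1 - b = (a + 1 - (b + 1)) + 1 by omega, List.range'_succ]
  simp

theorem commute_ascProd {c : G} {a b : ℕ} (H : ∀ j, a ≤ j → j ≤ b → Commute c (σ j)) :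
    Commute c (ascProd σ a b) := by
  unfold ascProd
  refine Commute.list_prod_right _ _ fun x hx => ?_
  simp only [List.mem_map, List.mem_range'_1] at hx
  obtain ⟨j, hj, rfl⟩ := hx
  exact H j (by omega) (by omega)

theorem commute_descProd {c : G} {a b : ℕ} (H : ∀ j, b ≤ j → j ≤ a → Commute c (σ j)) :
    Commute c (descProd σ a b) := by
  unfold descProd
  refine Commute.list_prod_right _ _ fun x hx => ?_
  simp only [List.mem_reverse, List.mem_map, List.mem_range'_1] at hx
  obtain ⟨j, hj, rfl⟩ := hx
  exact H j (by omega) (by omega)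

/-- The braid relations for `σ_1, …, σ_N`. -/
structure IsBraidFamily (σ : ℕ → G) (N : ℕ) : Prop where
  braid : ∀ i, 1 ≤ i → i + 1 ≤ N → σ i * σ (i + 1) * σ i = σ (i + 1) * σ i * σ (i + 1)
  comm : ∀ i j, 1 ≤ i → j ≤ N → i + 2 ≤ j → Commute (σ i) (σ j)

variable {N : ℕ}

theorem IsBraidFamily.mono (H : IsBraidFamily σ N) {M : ℕ} (hM : M ≤ N) : IsBraidFamily σ M :=
  ⟨fun i h1 h2 => H.braid i h1 (h2.trans hM), fun i j h1 h2 h3 => H.comm i j h1 (h2.trans hM) h3⟩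

theorem semiconj_asc (H : IsBraidFamily σ N) {i : ℕ} (hi : 1 ≤ i) (hiN : i + 1 ≤ N) :
    SemiconjBy (ascProd σ 1 N) (σ i) (σ (i + 1)) := by
  induction N, hiN using Nat.le_induction with
  | base =>
    obtain ⟨k, rfl⟩ : ∃ k, i = k + 1 := ⟨i - 1, by omega⟩
    rw [ascProd_succ (by omega), ascProd_succ (by omega), mul_assoc]
    have hc : Commute (ascProd σ 1 k) (σ (k + 1 + 1)) :=
      (commute_ascProd fun j h1 h2 => (H.comm j _ h1 le_rfl (by omega)).symm).symm
    have hb : SemiconjBy (σ (k + 1) * σ (k + 1 + 1)) (σ (k + 1)) (σ (k + 1 + 1)) := by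
      have := H.braid (k + 1) hi le_rfl
      rw [SemiconjBy, this, mul_assoc]
    exact SemiconjBy.mul_left hc hb
  | succ n hn ih =>
    rw [ascProd_succ (by omega)]
    exact (ih (H.mono n.le_succ)).mul_left (H.comm i (n + 1) hi le_rfl (by omega)).symm

theorem semiconj_asc_asc (H : IsBraidFamily σ N) {k : ℕ} (hk : k + 1 ≤ N) :
    SemiconjBy (ascProd σ 1 N) (ascProd σ 1 k) (ascProd σ 2 (k + 1)) := by
  induction k with
  | zero => simp [ascProd]
  | succ k ih =>
    rw [ascProd_succ (by omega), ascProd_succ (a := 2) (by omega)]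
    exact (ih (by omega)).mul_right (semiconj_asc H (by omega) hk)

/-- With `δ = P σ_N = σ_1 Q`, the shift gives `δ P = Q δ`, whence
`δ δ σ_N = σ_1 Q δ σ_N = σ_1 δ P σ_N = σ_1 δ δ`. -/
theorem semiconj_asc_sq (H : IsBraidFamily σ N) (hN : 1 ≤ N) :
    SemiconjBy (ascProd σ 1 N ^ 2) (σ N) (σ 1) := by
  obtain ⟨k, rfl⟩ : ∃ k, N = k + 1 := ⟨N - 1, by omega⟩
  have h1 := (semiconj_asc_asc H le_rfl).eq
  have h2 : ascProd σ 1 (k + 1) = σ 1 * ascProd σ 2 (k + 1) := ascProd_cons hN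
  have h3 : ascProd σ 1 (k + 1) = ascProd σ 1 k * σ (k + 1) := ascProd_succ (by omega)
  generalize ascProd σ 1 (k + 1) = δ at *
  generalize ascProd σ 1 k = P at *
  generalize ascProd σ 2 (k + 1) = Q at *
  calc δ ^ 2 * σ (k + 1) = (σ 1 * Q) * δ * σ (k + 1) := by rw [← h2, pow_two]
    _ = σ 1 * (Q * δ) * σ (k + 1) := by simp only [mul_assoc]
    _ = σ 1 * (δ * (P * σ (k + 1))) := by rw [← h1]; simp only [mul_assoc]
    _ = σ 1 * δ ^ 2 := by rw [← h3, pow_two]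

theorem semiconj_asc_pow (H : IsBraidFamily σ N) {i : ℕ} (hi : 1 ≤ i) (k : ℕ) (hk : i + k ≤ N) :
    SemiconjBy (ascProd σ 1 N ^ k) (σ i) (σ (i + k)) := by
  induction k with
  | zero => simp
  | succ k ih =>
    rw [pow_succ']
    exact (semiconj_asc H (i := i + k) (by omega) hk).mul_left (ih (by omega))

theorem commute_fullTwist (H : IsBraidFamily σ N) {i : ℕ} (hi : 1 ≤ i) (hiN : i ≤ N) :
    Commute (ascProd σ 1 N ^ (N + 1)) (σ i) := by
  have h1 := semiconj_asc_pow H hi (N - i) (by omega)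
  have h2 := semiconj_asc_sq H (by omega)
  have h3 := semiconj_asc_pow H le_rfl (i - 1) (by omega)
  rw [show i + (N - i) = N by omega] at h1
  rw [show 1 + (i - 1) = i by omega] at h3
  have h4 := h3.mul_left (h2.mul_left h1)
  rwa [← pow_add, ← pow_add, show i - 1 + (2 + (N - i)) = N + 1 by omega] at h4

/-- Unfolding the descending tail one generator at a time: `σ_N ⋯ σ_{k+2}` commutes with
`σ_1 ⋯ σ_k`, so moving it from the front to the back of the product is a conjugation, which the
full twist does not see. -/
theorem asc_mul_desc_pow (H : IsBraidFamily σ N) {k : ℕ} (hk : k + 1 ≤ N) :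
    (ascProd σ 1 k * descProd σ N (k + 1)) ^ (N + 1) = ascProd σ 1 N ^ (N + 1) := by
  obtain ⟨d, hd⟩ : ∃ d, N = k + 1 + d := ⟨N - (k + 1), by omega⟩
  induction d generalizing k with
  | zero =>
    have h0 : descProd σ N (k + 1) = σ (k + 1) := by simp [hd, descProd]
    have h1 : ascProd σ 1 N = ascProd σ 1 k * σ (k + 1) := by
      rw [hd]; exact ascProd_succ (by omega)
    rw [h0, h1]
  | succ d ih =>
    have ih := ih (k := k + 1) (by omega) (by omega)
    have hc : Commute (ascProd σ 1 k) (descProd σ N (k + 1 + 1)) :=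
      commute_descProd fun j h1 h2 => (commute_ascProd fun i h3 h4 =>
        (H.comm i j h3 h2 (by omega)).symm).symm
    have hz : Commute (ascProd σ 1 N ^ (N + 1)) (descProd σ N (k + 1 + 1)) :=
      commute_descProd fun j h1 h2 => commute_fullTwist H (by omega) h2
    rw [ascProd_succ (by omega)] at ih
    rw [descProd_snoc hk, ← mul_assoc, hc.eq]
    generalize descProd σ N (k + 1 + 1) = E at *
    rw [show E * ascProd σ 1 k * σ (k + 1) = E * (ascProd σ 1 k * σ (k + 1) * E) * E⁻¹ by group,
      conj_pow, ih, ← hz.eq, mul_inv_cancel_right]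

theorem prod_conj_telescope (Γ s D : G) (n : ℕ) :
    ((List.range n).map fun i => D⁻¹ * (Γ ^ (i + 1) * s * (Γ ^ (i + 1))⁻¹) * D).prod =
      D⁻¹ * ((Γ * s) ^ n * (Γ ^ n)⁻¹) * D := by
  induction n with
  | zero => simp
  | succ n ih =>
    rw [List.range_succ, List.map_append, List.prod_append, ih]
    simp only [List.map_cons, List.map_nil, List.prod_cons, List.prod_nil, mul_one]
    rw [pow_succ (Γ * s), pow_succ Γ n]
    group

end BraidRelations

/-- The Matsumoto–Cadavid–Korkmaz relation in the braid group: with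
`Γ = σ_1 ⋯ σ_{2h-1} · σ_{4h-1} ⋯ σ_{2h+1}`, `D₁ = (σ_1 ⋯ σ_{2h-1})^{2h}`,
`D₂ = (σ_{4h-1} ⋯ σ_{2h+1})^{2h}` and `B_i = D₂⁻¹ · Γ^{i+1} σ_{2h} Γ^{-(i+1)} · D₂`,
one has `(σ_1 ⋯ σ_{4h-1})^{4h} = (B_0 B_1 ⋯ B_{2h-1} · D₁ · D₂)²`. -/
theorem MCK_relation_in_braid_group
    {G : Type*} [Group G] (h : ℕ) (hh : 1 ≤ h) (σ : ℕ → G)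
    (hbraid : ∀ i, 1 ≤ i → i + 2 ≤ 4 * h →
      σ i * σ (i + 1) * σ i = σ (i + 1) * σ i * σ (i + 1))
    (hcomm : ∀ i j, 1 ≤ i → 1 ≤ j → i + 1 ≤ 4 * h → j + 1 ≤ 4 * h → i + 2 ≤ j →
      σ i * σ j = σ j * σ i)
    (Γ D₁ D₂ : G) (B : ℕ → G)
    (hΓ : Γ = ascProd σ 1 (2 * h - 1) * descProd σ (4 * h - 1) (2 * h + 1))
    (hD₁ : D₁ = (ascProd σ 1 (2 * h - 1)) ^ (2 * h))
    (hD₂ : D₂ = (descProd σ (4 * h - 1) (2 * h + 1)) ^ (2 * h))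
    (hB : ∀ i, B i = D₂⁻¹ * (Γ ^ (i + 1) * σ (2 * h) * (Γ ^ (i + 1))⁻¹) * D₂) :
    (ascProd σ 1 (4 * h - 1)) ^ (4 * h) =
      (((List.range (2 * h)).map B).prod * D₁ * D₂) ^ 2 := by
  have H : IsBraidFamily σ (4 * h - 1) :=
    ⟨fun i h1 h2 => hbraid i h1 (by omega),
      fun i j h1 h2 h3 => hcomm i j h1 (by omega) (by omega) (by omega) h3⟩
  have hAE : Commute (ascProd σ 1 (2 * h - 1)) (descProd σ (4 * h - 1) (2 * h + 1)) :=
    commute_descProd fun j h1 h2 => (commute_ascProd fun i h3 h4 =>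
      (H.comm i j h3 h2 (by omega)).symm).symm
  have hpow : Γ ^ (2 * h) = D₁ * D₂ := by rw [hΓ, hAE.mul_pow, hD₁, hD₂]
  have htwist : (Γ * σ (2 * h)) ^ (4 * h) = ascProd σ 1 (4 * h - 1) ^ (4 * h) := by
    have := asc_mul_desc_pow H (k := 2 * h - 1) (by omega)
    rw [show 2 * h - 1 + 1 = 2 * h by omega, show 4 * h - 1 + 1 = 4 * h by omega,
      descProd_snoc (by omega), ← mul_assoc, ← hΓ] at this
    exact this
  have hz : Commute (ascProd σ 1 (4 * h - 1) ^ (4 * h)) D₂ := by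
    rw [hD₂]
    refine (commute_descProd fun j h1 h2 => ?_).pow_right _
    have := commute_fullTwist H (i := j) (by omega) h2
    rwa [show 4 * h - 1 + 1 = 4 * h by omega] at this
  have hD : Commute D₁ D₂ := by
    rw [hD₁, hD₂]; exact hAE.pow_pow _ _
  have hprod : ((List.range (2 * h)).map B).prod * D₁ * D₂ =
      D₂⁻¹ * (Γ * σ (2 * h)) ^ (2 * h) * D₂ := by
    rw [funext hB, prod_conj_telescope, hpow, hD.eq]
    group
  have hconj := conj_pow (a := D₂⁻¹) (b := (Γ * σ (2 * h)) ^ (2 * h)) (i := 2)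
  rw [inv_inv] at hconj
  rw [hprod, hconj, ← pow_mul, show 2 * h * 2 = 4 * h by ring, htwist, mul_assoc, hz.eq,
    inv_mul_cancel_left]
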